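/- Let k have prime characteristic p > 2, let V = kv_1 ⊕ kv_2 ⊕ kv_3, and let G = ⟨g⟩ ≤ GL(V) be the cyclic group of order p generated by the transvection g fixing v_1 and v_2 and mapping v_3 to v_1 + v_3. Define λ(g^i, v_3) = i g^{i−1} for all i, κ^C(v_1, v_3) = g = −κ^C(v_3, v_1), κ^L(v_1, v_3) = v_2⊗1 = −κ^L(v_3, v_1), and set λ, κ^C, κ^L equal to zero on all other pairs of basis vectors. Then H_{λ,κ} = T_{kG}(kG⊗V⊗kG)/( gv_1 − v_1g, gv_2 − v_2g, gv_3 − v_1g − v_3g − 1, v_1v_3 − v_3v_1 − v_2 − g, v_1v_2 − v_2v_1, v_2v_3 − v_3v_2 ) is a PBW deformation of S(V)⋊G. -/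

import Mathlib

open TensorProduct

noncomputable section

namespace DeformKoszul

variable (k G V : Type) [Field k] [Group G] [AddCommGroup V] [Module k V]

/-- The free `k`-algebra on the vector space `kG ⊕ V`. -/
abbrev FreeAlg := TensorAlgebra k (MonoidAlgebra k G × V)

/-- The canonical embedding of the group algebra `kG` into the free algebra. -/
def gIn : MonoidAlgebra k G →ₗ[k] FreeAlg k G V :=
  (TensorAlgebra.ι k).comp (LinearMap.inl k (MonoidAlgebra k G) V)

/-- The canonical embedding of `V` into the free algebra. -/
def vIn : V →ₗ[k] FreeAlg k G V :=
  (TensorAlgebra.ι k).comp (LinearMap.inr k (MonoidAlgebra k G) V)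

/-- `V ⊗ kG → FreeAlg`, `v ⊗ x ↦ v·x`. -/
def embVG : V ⊗[k] MonoidAlgebra k G →ₗ[k] FreeAlg k G V :=
  (LinearMap.mul' k _).comp (TensorProduct.map (vIn k G V) (gIn k G V))

variable (ρ : Representation k G V)

/-- The defining relations of `H_{λ,κ}`: `kG` is a subalgebra (with the same unit),
`g·v = (ᵍv)·g + λ(g,v)`, and `v·w = w·v + κ^L(v,w) + κ^C(v,w)`. -/
inductive PRel (lam : G → V →ₗ[k] MonoidAlgebra k G)
    (κC : V →ₗ[k] V →ₗ[k] MonoidAlgebra k G)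
    (κL : V →ₗ[k] V →ₗ[k] (V ⊗[k] MonoidAlgebra k G)) :
    FreeAlg k G V → FreeAlg k G V → Prop
  | unit : PRel lam κC κL (gIn k G V 1) 1
  | gmul (x y : MonoidAlgebra k G) :
      PRel lam κC κL (gIn k G V x * gIn k G V y) (gIn k G V (x * y))
  | act (g : G) (v : V) :
      PRel lam κC κL (gIn k G V (MonoidAlgebra.of k G g) * vIn k G V v)
        (vIn k G V (ρ g v) * gIn k G V (MonoidAlgebra.of k G g) + gIn k G V (lam g v))
  | comm (v w : V) :
      PRel lam κC κL (vIn k G V v * vIn k G V w)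
        (vIn k G V w * vIn k G V v + embVG k G V (κL v w) + gIn k G V (κC v w))

variable (lam : G → V →ₗ[k] MonoidAlgebra k G)
    (κC : V →ₗ[k] V →ₗ[k] MonoidAlgebra k G)
    (κL : V →ₗ[k] V →ₗ[k] (V ⊗[k] MonoidAlgebra k G))

/-- The algebra `H_{λ,κ}`.  For `lam = 0`, `κC = 0`, `κL = 0` this is (the presentation
of) the skew group algebra `S(V) ⋊ G`. -/
abbrev HP := RingQuot (PRel k G V ρ lam κC κL)

/-- The quotient map onto `H_{λ,κ}`. -/
def toHP : FreeAlg k G V →ₐ[k] HP k G V ρ lam κC κL :=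
  RingQuot.mkAlgHom k (PRel k G V ρ lam κC κL)

/-- Degree-`n` part of the free algebra: `kG` has degree 0 and `V` degree 1. -/
def grT : ℕ → Submodule k (FreeAlg k G V)
  | 0 => Subalgebra.toSubmodule (Algebra.adjoin k (Set.range (gIn k G V)))
  | n+1 => grT n * (LinearMap.range (vIn k G V) * grT 0)

/-- Filtration of the free algebra, `kG` in degree 0 and `V` in degree 1. -/
def filtT : ℕ → Submodule k (FreeAlg k G V)
  | 0 => grT k G V 0
  | n+1 => filtT n ⊔ grT k G V (n+1)

/-- The induced filtration on `H_{λ,κ}`. -/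
def filtP (d : ℕ) : Submodule k (HP k G V ρ lam κC κL) :=
  (filtT k G V d).map (toHP k G V ρ lam κC κL).toLinearMap

/-- `H_{λ,κ}` is a PBW deformation of `S(V) ⋊ G`:  the associated graded algebra is
`S(V) ⋊ G`, equivalently (all filtered pieces being finite dimensional) each filtered
piece has the same dimension as the corresponding one of `S(V) ⋊ G = H_{0,0}`. -/
def IsPBWP : Prop :=
  ∀ d, Module.finrank k (filtP k G V ρ lam κC κL d) = Module.finrank k (filtP k G V ρ 0 0 0 d)

section Example7


variable (k : Type) [Field k] (p : ℕ) [Fact p.Prime] [CharP k p]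

/-- scalar of `x = gⁱ`, namely `i` viewed in `k` (well defined since `char k = p`). -/
def cf (x : Multiplicative (ZMod p)) : k := ZMod.castHom (dvd_refl p) k x.toAdd

lemma cf_mul (x y : Multiplicative (ZMod p)) : cf k p (x * y) = cf k p x + cf k p y := by
  simp [cf, toAdd_mul, map_add]

lemma cf_one : cf k p 1 = 0 := by simp [cf]

/-- the distinguished generator `g` of the cyclic group of order `p`. -/
def gg : Multiplicative (ZMod p) := Multiplicative.ofAdd 1


/-- the nilpotent part of the transvection on `k³`: `f ↦ f(2)·e₀`. -/
def E3 : (Fin 3 → k) →ₗ[k] (Fin 3 → k) :=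
  (LinearMap.single k (fun _ => k) 0).comp (LinearMap.proj 2)

lemma E3sq : (E3 k) * (E3 k) = 0 := by
  ext f i
  simp [E3, Module.End.mul_apply, Pi.single_apply]

/-- the representation of `G = ⟨g⟩ ≅ ℤ/p` on `V = k³` in which the generator `g` fixes
`v₁ = e₀` and `v₂ = e₁` and sends `v₃ = e₂` to `v₁ + v₃` (a transvection). -/
def ρ3 : Representation k (Multiplicative (ZMod p)) (Fin 3 → k) where
  toFun x := 1 + cf k p x • E3 k
  map_one' := by simp [cf_one]
  map_mul' x y := by
    show 1 + cf k p (x * y) • E3 k = (1 + cf k p x • E3 k) * (1 + cf k p y • E3 k)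
    rw [cf_mul, add_smul, mul_add, add_mul, add_mul, mul_one, one_mul, smul_mul_smul_comm,
      E3sq, smul_zero]
    simp only [mul_one]
    abel

/-- `λ(gⁱ, v₃) = i·g^{i-1}` and `λ(gⁱ, v₁) = λ(gⁱ, v₂) = 0`. -/
def lam7 : Multiplicative (ZMod p) → (Fin 3 → k) →ₗ[k] MonoidAlgebra k (Multiplicative (ZMod p)) :=
  fun x => (LinearMap.proj 2 : ((Fin 3 → k)) →ₗ[k] k).smulRight
    (cf k p x • MonoidAlgebra.single (x * (gg p)⁻¹) (1 : k))

/-- the alternating bilinear form `(u,v) ↦ u₀v₂ − u₂v₀` (so `B(v₁,v₃) = 1`). -/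
def B3det : (Fin 3 → k) →ₗ[k] (Fin 3 → k) →ₗ[k] k :=
  (LinearMap.mul k k).compl₁₂ (LinearMap.proj 0) (LinearMap.proj 2)
    - (LinearMap.mul k k).compl₁₂ (LinearMap.proj 2) (LinearMap.proj 0)

/-- `κ^C(v₁,v₃) = g = −κ^C(v₃,v₁)`, zero on all other pairs of basis vectors. -/
def κC7 : (Fin 3 → k) →ₗ[k] (Fin 3 → k) →ₗ[k] MonoidAlgebra k (Multiplicative (ZMod p)) :=
  (B3det k).compr₂
    (LinearMap.toSpanSingleton k (MonoidAlgebra k (Multiplicative (ZMod p)))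
      (MonoidAlgebra.single (gg p) 1))

/-- `κ^L(v₁,v₃) = v₂ ⊗ 1 = −κ^L(v₃,v₁)`, zero on all other pairs of basis vectors. -/
def κL7 : (Fin 3 → k) →ₗ[k] (Fin 3 → k) →ₗ[k]
    ((Fin 3 → k) ⊗[k] MonoidAlgebra k (Multiplicative (ZMod p))) :=
  (B3det k).compr₂
    (LinearMap.toSpanSingleton k ((Fin 3 → k) ⊗[k] MonoidAlgebra k (Multiplicative (ZMod p)))
      ((Pi.single (1 : Fin 3) (1 : k)) ⊗ₜ[k] (1 : MonoidAlgebra k (Multiplicative (ZMod p)))))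

end Example7

end DeformKoszul

open DeformKoszul

/-!
Inside `H_{λ,κ}` the elements of `kG`, `v₁` and `v₂` commute with one another, and the remaining
relations say that `[v₃, ·]` acts on the commutative algebra `A = kG[v₂][v₁]` that they generate as
a derivation `δ`; that `δ` is well defined on `kG` uses `char k = p`. So `H_{λ,κ}` should be the Ore
extension `A[v₃; δ]`. Indeed it acts on `A[X]`, with `A` acting by multiplication and `v₃` by
`X + δ`, and the normal ordering map `∑ aₙ Xⁿ ↦ ∑ aₙ v₃ⁿ` is a two-sided inverse of `h ↦ h · 1`.
Since `δ` raises the total degree by at most one, this bijection matches the filtration of `H_{λ,κ}`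
with the filtration of `A[X]` by total degree, whose dimensions do not depend on the parameters.
-/

namespace DeformKoszul

open Polynomial

lemma map_eq_sum_smul_map_single {k ι M : Type*} [Semiring k] [Fintype ι] [DecidableEq ι]
    [AddCommMonoid M] [Module k M] (φ : (ι → k) →ₗ[k] M) (v : ι → k) :
    φ v = ∑ i, v i • φ (Pi.single i 1) := by
  simp only [← map_smul, ← map_sum, ← Pi.single_smul, smul_eq_mul, mul_one, Finset.univ_sum_single]

lemma mem_of_C_mem_of_X_mem {k A : Type*} [CommSemiring k] [Semiring A] [Algebra k A]
    {S : Subalgebra k A[X]} (hC : ∀ a, C a ∈ S) (hX : X ∈ S) (f : A[X]) : f ∈ S := by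
  induction f using Polynomial.induction_on' with
  | add f g hf hg => exact add_mem hf hg
  | monomial n a =>
    rw [← C_mul_X_pow_eq_monomial]
    exact mul_mem (hC a) (pow_mem hX n)

section Filtration

variable {k G V : Type} [Field k] [AddCommGroup V] [Module k V]

lemma grT_zero :
    grT k G V 0 = Subalgebra.toSubmodule (Algebra.adjoin k (Set.range (gIn k G V))) := by
  rw [grT]

lemma grT_succ (n : ℕ) :
    grT k G V (n + 1) = grT k G V n * (LinearMap.range (vIn k G V) * grT k G V 0) := by
  conv_lhs => rw [grT]

lemma one_mem_grT_zero : 1 ∈ grT k G V 0 := by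
  rw [grT_zero]
  exact one_mem (Algebra.adjoin k (Set.range (gIn k G V)))

lemma grT_mul_grT_zero (n : ℕ) : grT k G V n * grT k G V 0 = grT k G V n := by
  have idem : grT k G V 0 * grT k G V 0 = grT k G V 0 := by
    rw [grT_zero]
    exact Subalgebra.isIdempotentElem_toSubmodule _
  cases n with
  | zero => exact idem
  | succ n => rw [grT_succ, mul_assoc, mul_assoc, idem]

lemma grT_mul_grT (m n : ℕ) : grT k G V m * grT k G V n = grT k G V (m + n) := by
  induction n with
  | zero => exact grT_mul_grT_zero m
  | succ n ih => rw [← add_assoc, grT_succ, grT_succ, ← mul_assoc, ih]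

instance gradedMonoid_grT : SetLike.GradedMonoid (grT k G V) where
  one_mem := one_mem_grT_zero
  mul_mem m n _ _ hs ht := by
    rw [← grT_mul_grT]
    exact Submodule.mul_mem_mul hs ht

lemma gIn_mem_grT (x : MonoidAlgebra k G) : gIn k G V x ∈ grT k G V 0 := by
  rw [grT_zero]
  exact Algebra.subset_adjoin (Set.mem_range_self x)

lemma vIn_mem_grT (v : V) : vIn k G V v ∈ grT k G V 1 := by
  have h := Submodule.mul_mem_mul one_mem_grT_zero
    (Submodule.mul_mem_mul (LinearMap.mem_range_self (vIn k G V) v) one_mem_grT_zero)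
  rwa [← grT_succ, one_mul, mul_one] at h

lemma monotone_filtT : Monotone (filtT k G V) :=
  monotone_nat_of_le_succ fun _ => by
    rw [filtT]
    exact le_sup_left

lemma grT_le_filtT (n : ℕ) : grT k G V n ≤ filtT k G V n := by
  cases n with
  | zero => rw [filtT]
  | succ n =>
    rw [filtT]
    exact le_sup_right

lemma algHom_embVG {R : Type*} [Ring R] [Algebra k R] (φ : FreeAlg k G V →ₐ[k] R)
    (z : V ⊗[k] MonoidAlgebra k G) :
    φ (embVG k G V z) = LinearMap.mul' k R
      (TensorProduct.map (φ.toLinearMap ∘ₗ vIn k G V) (φ.toLinearMap ∘ₗ gIn k G V) z) := by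
  induction z using TensorProduct.induction_on with
  | zero => simp
  | tmul v x => simp [embVG]
  | add z w hz hw => simp [hz, hw]

section Module

variable {M : Type*} [AddCommGroup M] [Module k M] {F : ℕ → Submodule k M}
  {π : FreeAlg k G V →ₐ[k] Module.End k M}

lemma apply_mem_of_mem_grT_zero
    (hg : ∀ x d, ∀ m ∈ F d, π (gIn k G V x) m ∈ F d)
    {t : FreeAlg k G V} (ht : t ∈ grT k G V 0) {d : ℕ} {m : M} (hm : m ∈ F d) :
    π t m ∈ F d := by
  rw [grT_zero] at ht
  induction ht using Algebra.adjoin_induction generalizing m with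
  | mem t ht =>
    obtain ⟨x, rfl⟩ := ht
    exact hg x d m hm
  | algebraMap r => simpa using Submodule.smul_mem _ r hm
  | add s t _ _ hs ht => simpa only [map_add, LinearMap.add_apply] using add_mem (hs hm) (ht hm)
  | mul s t _ _ hs ht => simpa only [map_mul, Module.End.mul_apply] using hs (ht hm)

lemma apply_mem_of_mem_grT
    (hg : ∀ x d, ∀ m ∈ F d, π (gIn k G V x) m ∈ F d)
    (hv : ∀ v d, ∀ m ∈ F d, π (vIn k G V v) m ∈ F (d + 1))
    {n : ℕ} {t : FreeAlg k G V} (ht : t ∈ grT k G V n) {d : ℕ} {m : M} (hm : m ∈ F d) :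
    π t m ∈ F (d + n) := by
  induction n generalizing t d m with
  | zero => exact apply_mem_of_mem_grT_zero hg ht hm
  | succ n ih =>
    rw [grT_succ, ← mul_assoc] at ht
    induction ht using Submodule.mul_induction_on' with
    | mem_mul_mem s hs u hu =>
      induction hs using Submodule.mul_induction_on' with
      | mem_mul_mem s hs w hw =>
        obtain ⟨v, rfl⟩ := hw
        rw [map_mul, map_mul, ← add_assoc, add_right_comm]
        exact ih hs (hv v d _ (apply_mem_of_mem_grT_zero hg hu hm))
      | add s _ t _ hs ht => simpa only [add_mul, map_add, LinearMap.add_apply] using add_mem hs ht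
    | add s _ t _ hs ht => simpa only [map_add, LinearMap.add_apply] using add_mem hs ht

lemma apply_mem_of_mem_filtT (hF : Monotone F)
    (hg : ∀ x d, ∀ m ∈ F d, π (gIn k G V x) m ∈ F d)
    (hv : ∀ v d, ∀ m ∈ F d, π (vIn k G V v) m ∈ F (d + 1))
    {n : ℕ} {t : FreeAlg k G V} (ht : t ∈ filtT k G V n) {d : ℕ} {m : M} (hm : m ∈ F d) :
    π t m ∈ F (d + n) := by
  induction n generalizing t with
  | zero => exact apply_mem_of_mem_grT hg hv ht hm
  | succ n ih =>
    rw [filtT] at ht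
    obtain ⟨s, hs, u, hu, rfl⟩ := Submodule.mem_sup.1 ht
    rw [map_add]
    exact add_mem (hF (by lia) (ih hs)) (apply_mem_of_mem_grT hg hv hu hm)

end Module

end Filtration

section Presentation

variable {k G V : Type} [Field k] [Group G] [AddCommGroup V] [Module k V]
  (ρ : Representation k G V) (lam : G → V →ₗ[k] MonoidAlgebra k G)
  (κC : V →ₗ[k] V →ₗ[k] MonoidAlgebra k G)
  (κL : V →ₗ[k] V →ₗ[k] (V ⊗[k] MonoidAlgebra k G))

/-- The algebra map `kG → H_{λ,κ}`. -/
def groupHP : MonoidAlgebra k G →ₐ[k] HP k G V ρ lam κC κL :=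
  AlgHom.ofLinearMap ((toHP k G V ρ lam κC κL).toLinearMap ∘ₗ gIn k G V)
    ((RingQuot.mkAlgHom_rel k PRel.unit).trans (map_one _))
    fun x y => (RingQuot.mkAlgHom_rel k (PRel.gmul x y)).symm.trans (map_mul _ _ _)

/-- The linear map `V → H_{λ,κ}`. -/
def vectorHP : V →ₗ[k] HP k G V ρ lam κC κL :=
  (toHP k G V ρ lam κC κL).toLinearMap ∘ₗ vIn k G V

lemma toHP_gIn (x : MonoidAlgebra k G) :
    toHP k G V ρ lam κC κL (gIn k G V x) = groupHP ρ lam κC κL x := rfl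

lemma toHP_vIn (v : V) : toHP k G V ρ lam κC κL (vIn k G V v) = vectorHP ρ lam κC κL v := rfl

lemma monotone_filtP : Monotone (filtP k G V ρ lam κC κL) := fun _ _ h =>
  Submodule.map_mono (monotone_filtT h)

lemma groupHP_mul_mem_filtP (x : MonoidAlgebra k G) (u v w : V) (a b c : ℕ) :
    groupHP ρ lam κC κL x * vectorHP ρ lam κC κL v ^ b * vectorHP ρ lam κC κL u ^ a *
      vectorHP ρ lam κC κL w ^ c ∈ filtP k G V ρ lam κC κL (a + b + c) := by
  have vIn_pow_mem (v : V) (n : ℕ) : vIn k G V v ^ n ∈ grT k G V n := by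
    simpa using SetLike.pow_mem_graded n (vIn_mem_grT (k := k) (G := G) v)
  have h := SetLike.mul_mem_graded (SetLike.mul_mem_graded (SetLike.mul_mem_graded (gIn_mem_grT x)
    (vIn_pow_mem v b)) (vIn_pow_mem u a)) (vIn_pow_mem w c)
  refine ⟨_, monotone_filtT (by lia) (grT_le_filtT _ h), ?_⟩
  simp [toHP_gIn, toHP_vIn]


/-- `f` and `φ` satisfy the defining relations of `H_{λ,κ}` that involve `V`. -/
structure IsHPPair {R : Type*} [Ring R] [Algebra k R] (f : MonoidAlgebra k G →ₐ[k] R)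
    (φ : V →ₗ[k] R) : Prop where
  act (x : G) (v : V) : f (MonoidAlgebra.of k G x) * φ v =
    φ (ρ x v) * f (MonoidAlgebra.of k G x) + f (lam x v)
  comm (v w : V) : φ v * φ w = φ w * φ v +
    LinearMap.mul' k R (TensorProduct.map φ f.toLinearMap (κL v w)) + f (κC v w)

lemma isHPPair_groupHP_vectorHP :
    IsHPPair ρ lam κC κL (groupHP ρ lam κC κL) (vectorHP ρ lam κC κL) where
  act x v := by
    have h := RingQuot.mkAlgHom_rel k (PRel.act (ρ := ρ) (lam := lam) (κC := κC) (κL := κL) x v)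
    simp only [map_mul, map_add] at h
    exact h
  comm v w := by
    have h := RingQuot.mkAlgHom_rel k (PRel.comm (ρ := ρ) (lam := lam) (κC := κC) (κL := κL) v w)
    simp only [map_mul, map_add, algHom_embVG] at h
    exact h

variable {ρ lam κC κL}

lemma IsHPPair.lift_rel {R : Type*} [Ring R] [Algebra k R] {f : MonoidAlgebra k G →ₐ[k] R}
    {φ : V →ₗ[k] R} (h : IsHPPair ρ lam κC κL f φ) {s t : FreeAlg k G V}
    (hst : PRel k G V ρ lam κC κL s t) :
    TensorAlgebra.lift k (f.toLinearMap.coprod φ) s =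
      TensorAlgebra.lift k (f.toLinearMap.coprod φ) t := by
  set ψ := TensorAlgebra.lift k (f.toLinearMap.coprod φ) with hψ
  have hψg : ψ.toLinearMap ∘ₗ gIn k G V = f.toLinearMap := by ext; simp [hψ, gIn]
  have hψv : ψ.toLinearMap ∘ₗ vIn k G V = φ := by ext; simp [hψ, vIn]
  have ψg (x : MonoidAlgebra k G) : ψ (gIn k G V x) = f x := LinearMap.congr_fun hψg x
  have ψv (v : V) : ψ (vIn k G V v) = φ v := LinearMap.congr_fun hψv v
  cases hst with
  | unit => rw [ψg, map_one, map_one]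
  | gmul x y => rw [map_mul, ψg, ψg, ψg, map_mul]
  | act x v => simpa only [map_mul, map_add, ψg, ψv] using h.act x v
  | comm v w => simpa only [map_mul, map_add, ψg, ψv, algHom_embVG, hψg, hψv] using h.comm v w

/-- The universal property of `H_{λ,κ}`. -/
def IsHPPair.lift {R : Type*} [Ring R] [Algebra k R] {f : MonoidAlgebra k G →ₐ[k] R}
    {φ : V →ₗ[k] R} (h : IsHPPair ρ lam κC κL f φ) : HP k G V ρ lam κC κL →ₐ[k] R :=
  RingQuot.liftAlgHom k ⟨TensorAlgebra.lift k (f.toLinearMap.coprod φ), fun _ _ => h.lift_rel⟩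

section Lift

variable {R : Type*} [Ring R] [Algebra k R] {f : MonoidAlgebra k G →ₐ[k] R} {φ : V →ₗ[k] R}
  (h : IsHPPair ρ lam κC κL f φ)

@[simp] lemma IsHPPair.lift_groupHP (x : MonoidAlgebra k G) :
    h.lift (groupHP ρ lam κC κL x) = f x := by
  rw [← toHP_gIn, toHP, IsHPPair.lift, RingQuot.liftAlgHom_mkAlgHom_apply]
  simp [gIn]

@[simp] lemma IsHPPair.lift_vectorHP (v : V) : h.lift (vectorHP ρ lam κC κL v) = φ v := by
  rw [← toHP_vIn, toHP, IsHPPair.lift, RingQuot.liftAlgHom_mkAlgHom_apply]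
  simp [vIn]

end Lift

@[elab_as_elim]
lemma HP_induction {motive : HP k G V ρ lam κC κL → Prop}
    (groupHP : ∀ x, motive (groupHP ρ lam κC κL x))
    (vectorHP : ∀ v, motive (vectorHP ρ lam κC κL v))
    (add : ∀ s t, motive s → motive t → motive (s + t))
    (mul : ∀ s t, motive s → motive t → motive (s * t)) (h : HP k G V ρ lam κC κL) :
    motive h := by
  obtain ⟨t, rfl⟩ := RingQuot.mkAlgHom_surjective k _ h
  induction t using TensorAlgebra.induction with
  | algebraMap r =>
    rw [AlgHom.commutes, ← AlgHom.commutes (DeformKoszul.groupHP ρ lam κC κL)]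
    exact groupHP _
  | ι z =>
    have hz : TensorAlgebra.ι k z = gIn k G V z.1 + vIn k G V z.2 := by
      rw [gIn, vIn, LinearMap.comp_apply, LinearMap.comp_apply, ← map_add]
      simp
    rw [hz, map_add]
    exact add _ _ (groupHP z.1) (vectorHP z.2)
  | mul s t hs ht => rw [map_mul]; exact mul _ _ hs ht
  | add s t hs ht => rw [map_add]; exact add _ _ hs ht

end Presentation

section OreExtension

variable {k A : Type*} [CommRing k] [CommRing A] [Algebra k A]

/-- The derivation of `A[X]` that kills `X` and extends `δ`, acting on coefficients. -/
def coeffDerivation (δ : Derivation k A A) : Derivation k A[X] A[X] :=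
  PolynomialModule.equivPolynomialSelf.toLinearMap.compDer δ.mapCoeffs

@[simp] lemma coeffDerivation_monomial (δ : Derivation k A A) (n : ℕ) (a : A) :
    coeffDerivation δ (monomial n a) = monomial n (δ a) := by
  simp [coeffDerivation]

@[simp] lemma coeffDerivation_C (δ : Derivation k A A) (a : A) :
    coeffDerivation δ (C a) = C (δ a) :=
  coeffDerivation_monomial δ 0 a

@[simp] lemma coeffDerivation_X (δ : Derivation k A A) : coeffDerivation δ X = 0 := by
  simp [coeffDerivation]

section OrePair

variable {R : Type*} [Ring R] [Algebra k R]

/-- `ι` and `x` satisfy the relations `x a = a x + δ a` of the Ore extension `A[X; δ]`. -/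
def IsOrePair (δ : Derivation k A A) (ι : A →ₐ[k] R) (x : R) : Prop :=
  ∀ a, x * ι a = ι a * x + ι (δ a)

/-- The elements of `A` for which the Ore relation `x a = a x + δ a` holds. -/
def oreSubalgebra (δ : Derivation k A A) (ι : A →ₐ[k] R) (x : R) : Subalgebra k A where
  carrier := {a | x * ι a = ι a * x + ι (δ a)}
  algebraMap_mem' r := by
    simp [Algebra.commutes]
  add_mem' {a b} ha hb := by
    simp only [Set.mem_ofPred_eq] at ha hb ⊢
    simp only [map_add, mul_add, add_mul, ha, hb]
    abel
  mul_mem' {a b} ha hb := by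
    simp only [Set.mem_ofPred_eq] at ha hb ⊢
    rw [map_mul, ← mul_assoc, ha, add_mul, mul_assoc, hb, δ.leibniz, smul_eq_mul, smul_eq_mul,
      mul_comm b, map_add, map_mul, map_mul, mul_add, mul_assoc]
    abel

/-- The candidate for the isomorphism `A[X; δ] → R`, `∑ aₙ Xⁿ ↦ ∑ ι(aₙ) xⁿ`. -/
def normalOrder (ι : A →ₐ[k] R) (x : R) : A[X] →ₗ[k] R :=
  lsum fun n => LinearMap.mulRight k (x ^ n) ∘ₗ ι.toLinearMap

@[simp] lemma normalOrder_monomial (ι : A →ₐ[k] R) (x : R) (n : ℕ) (a : A) :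
    normalOrder ι x (monomial n a) = ι a * x ^ n := by
  simp [normalOrder, lsum_apply, sum_monomial_index]

lemma normalOrder_one (ι : A →ₐ[k] R) (x : R) : normalOrder ι x 1 = 1 := by
  rw [← monomial_zero_one, normalOrder_monomial, map_one, pow_zero, one_mul]

lemma normalOrder_C_mul (ι : A →ₐ[k] R) (x : R) (a : A) (f : A[X]) :
    normalOrder ι x (C a * f) = ι a * normalOrder ι x f := by
  induction f using Polynomial.induction_on' with
  | add f g hf hg => rw [mul_add, map_add, map_add, hf, hg, mul_add]
  | monomial n b => rw [C_mul_monomial, normalOrder_monomial, normalOrder_monomial, map_mul,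
      mul_assoc]

end OrePair

/-- The action of the variable of the Ore extension `A[X; δ]` on its normal forms `∑ aₙ Xⁿ`. -/
def oreX (δ : Derivation k A A) : Module.End k A[X] :=
  LinearMap.mulLeft k X + (coeffDerivation δ).toLinearMap

lemma oreX_apply (δ : Derivation k A A) (f : A[X]) :
    oreX δ f = X * f + coeffDerivation δ f := rfl

lemma oreX_monomial (δ : Derivation k A A) (n : ℕ) (a : A) :
    oreX δ (monomial n a) = monomial (n + 1) a + monomial n (δ a) := by
  rw [oreX_apply, X_mul_monomial, coeffDerivation_monomial]

variable (k A) in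
/-- The action of `A` on `A[X]` by multiplication. -/
def coeffMul : A →ₐ[k] Module.End k A[X] :=
  (Algebra.lmul k A[X]).comp CAlgHom

@[simp] lemma coeffMul_apply (a : A) (f : A[X]) : coeffMul k A a f = C a * f := rfl

lemma isOrePair_coeffMul_oreX (δ : Derivation k A A) :
    IsOrePair δ (coeffMul k A) (oreX δ) := by
  intro a
  ext1 f
  simp only [Module.End.mul_apply, LinearMap.add_apply, coeffMul_apply, oreX_apply,
    Derivation.leibniz, coeffDerivation_C, smul_eq_mul]
  ring

lemma normalOrder_coeffMul_oreX_apply_one (δ : Derivation k A A) (f : A[X]) :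
    normalOrder (coeffMul k A) (oreX δ) f 1 = f := by
  have oreX_pow (n : ℕ) : (oreX δ ^ n) 1 = X ^ n := by
    induction n with
    | zero => rfl
    | succ n ih =>
      rw [pow_succ', Module.End.mul_apply, ih, X_pow_eq_monomial, oreX_monomial, δ.map_one_eq_zero,
        map_zero, add_zero, X_pow_eq_monomial]
  induction f using Polynomial.induction_on' with
  | add f g hf hg => rw [map_add, LinearMap.add_apply, hf, hg]
  | monomial n a => rw [normalOrder_monomial, Module.End.mul_apply, oreX_pow, coeffMul_apply,
      C_mul_X_pow_eq_monomial]

variable {R : Type*} [Ring R] [Algebra k R]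

lemma IsOrePair.normalOrder_oreX {δ : Derivation k A A} {ι : A →ₐ[k] R} {x : R}
    (h : IsOrePair δ ι x) (f : A[X]) :
    normalOrder ι x (oreX δ f) = x * normalOrder ι x f := by
  induction f using Polynomial.induction_on' with
  | add f g hf hg => rw [map_add, map_add, map_add, hf, hg, mul_add]
  | monomial n a =>
    rw [oreX_monomial, map_add, normalOrder_monomial, normalOrder_monomial, normalOrder_monomial,
      ← mul_assoc, h a, add_mul, mul_assoc, ← pow_succ']

lemma map_normalOrder {S : Type*} [Ring S] [Algebra k S] (π : R →ₐ[k] S) (ι : A →ₐ[k] R) (x : R)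
    (f : A[X]) : π (normalOrder ι x f) = normalOrder (π.comp ι) (π x) f := by
  induction f using Polynomial.induction_on' with
  | add f g hf hg => simp only [map_add, hf, hg]
  | monomial n a => simp

end OreExtension

section MonoidAlgebra

variable {k G : Type*} [CommRing k]

/-- The linear endomorphism of the group algebra `kG` that multiplies `g ∈ G` by `χ g`. -/
def scaleBy (χ : G → k) : MonoidAlgebra k G →ₗ[k] MonoidAlgebra k G :=
  Finsupp.linearCombination k (fun g => MonoidAlgebra.single g (χ g)) ∘ₗ
    (MonoidAlgebra.coeffLinearEquiv k).toLinearMap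

lemma scaleBy_single (χ : G → k) (g : G) (r : k) :
    scaleBy χ (MonoidAlgebra.single g r) = χ g • MonoidAlgebra.single g r := by
  simp [scaleBy, mul_comm r]

variable [CommMonoid G]

/-- The derivation of the group algebra `kG` attached to an additive character of `G`. -/
def characterDerivation (χ : Additive G →+ k) :
    Derivation k (MonoidAlgebra k G) (MonoidAlgebra k G) :=
  Derivation.mk' (scaleBy fun g => χ (.ofMul g)) fun a b => by
    induction a using MonoidAlgebra.induction_linear with
    | zero => simp
    | add a a' ha ha' => rw [add_mul, map_add, map_add, ha, ha', smul_add, add_smul]; abel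
    | single x r =>
      induction b using MonoidAlgebra.induction_linear with
      | zero => simp
      | add b b' hb hb' => rw [mul_add, map_add, map_add, hb, hb', smul_add, add_smul]; abel
      | single y s =>
        rw [MonoidAlgebra.single_mul_single, scaleBy_single, scaleBy_single, scaleBy_single,
          smul_eq_mul, smul_eq_mul, mul_smul_comm, mul_smul_comm, MonoidAlgebra.single_mul_single,
          MonoidAlgebra.single_mul_single, mul_comm y, mul_comm s, ofMul_mul, map_add, add_smul,
          add_comm]

@[simp] lemma characterDerivation_single (χ : Additive G →+ k) (g : G) (r : k) :
    characterDerivation χ (MonoidAlgebra.single g r) =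
      χ (.ofMul g) • MonoidAlgebra.single g r :=
  scaleBy_single _ g r

end MonoidAlgebra

-- Instances on `B[X][X][X]` and its endomorphism ring are nested too deeply for the default value.
set_option maxSynthPendingDepth 6

section TransvectionRelations

variable {k B : Type*} [CommRing k] [CommRing B] [Algebra k B]
  {R : Type*} [Ring R] [Algebra k R]

/-- The defining relations of the example, between a copy `f` of the group algebra `B = kG` and
elements `s 0`, `s 1`, `s 2` standing for `v₁`, `v₂`, `v₃`. The parameters are the derivation
`θ : gⁱ ↦ i gⁱ`, the elements `u` and `w` of `B` for which `λ(x, v₃) = u θ(x)` and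
`κ^C(v₁, v₃) = w`, and the scalar `γ` for which `κ^L(v₁, v₃) = γ v₂ ⊗ 1`. -/
structure TransvectionRelations (θ : Derivation k B B) (u w : B) (γ : k) (f : B →ₐ[k] R)
    (s : Fin 3 → R) : Prop where
  commute_zero (b : B) : Commute (f b) (s 0)
  commute_one (b : B) : Commute (f b) (s 1)
  act_two (b : B) : f b * s 2 = s 2 * f b + (s 0 * f (θ b) + f (u * θ b))
  commute_zero_one : Commute (s 0) (s 1)
  commute_one_two : Commute (s 1) (s 2)
  comm_zero_two : s 0 * s 2 = s 2 * s 0 + (γ • s 1 + f w)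

/-- The derivation `[v₃, ·]` of the commutative algebra `B[v₂][v₁]` that is prescribed by
`TransvectionRelations`; here `v₂ = C X` is the inner and `v₁ = X` the outer variable. -/
def transvectionDerivation (θ : Derivation k B B) (u w : B) (γ : k) :
    Derivation k B[X][X] B[X][X] :=
  -((X + C (C u)) • coeffDerivation (coeffDerivation θ) +
    (γ • C X + C (C w)) • derivative'.restrictScalars k)

variable {θ : Derivation k B B} {u w : B} {γ : k}

lemma transvectionDerivation_C_C (b : B) :
    transvectionDerivation θ u w γ (C (C b)) = -(X * C (C (θ b)) + C (C (u * θ b))) := by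
  simp [transvectionDerivation, add_mul]

lemma transvectionDerivation_C_X : transvectionDerivation θ u w γ (C X) = 0 := by
  simp [transvectionDerivation]

lemma transvectionDerivation_X :
    transvectionDerivation θ u w γ X = -(γ • C X + C (C w)) := by
  simp [transvectionDerivation]

lemma transvectionDerivation_monomial (a b : ℕ) (r : B) :
    transvectionDerivation θ u w γ (monomial a (monomial b r)) =
      -(monomial (a + 1) (monomial b (θ r)) + monomial a (monomial b (u * θ r)) +
        (a : k) • (γ • monomial (a - 1) (monomial (b + 1) r) +
          monomial (a - 1) (monomial b (w * r)))) := by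
  simp only [transvectionDerivation, Derivation.neg_apply, Derivation.add_apply,
    Derivation.smul_apply, coeffDerivation_monomial, Derivation.restrictScalars_apply,
    derivative'_apply, derivative_monomial, smul_eq_mul, add_mul, smul_mul_assoc, X_mul_monomial,
    C_mul_monomial]
  simp only [← map_natCast (algebraMap k B[X]), mul_comm _ (algebraMap k B[X] _),
    ← Algebra.smul_def, ← smul_monomial, mul_smul_comm, smul_add, X_mul_monomial, C_mul_monomial]
  rw [smul_comm γ]

lemma IsOrePair.transvectionRelations {ι : B[X][X] →ₐ[k] R} {x : R}
    (h : IsOrePair (transvectionDerivation θ u w γ) ι x) :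
    TransvectionRelations θ u w γ (ι.comp (CAlgHom.comp CAlgHom)) ![ι X, ι (C X), x] where
  commute_zero b := (Commute.all _ _).map ι
  commute_one b := (Commute.all _ _).map ι
  act_two b := by
    change ι (C (C b)) * x = x * ι (C (C b)) + (ι X * ι (C (C (θ b))) + ι (C (C (u * θ b))))
    rw [h, transvectionDerivation_C_C, map_neg, map_add, map_mul, neg_add_cancel_right]
  commute_zero_one := (Commute.all _ _).map ι
  commute_one_two := by
    change ι (C X) * x = x * ι (C X)
    rw [h, transvectionDerivation_C_X, map_zero, add_zero]
  comm_zero_two := by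
    change ι X * x = x * ι X + (γ • ι (C X) + ι (C (C w)))
    rw [h, transvectionDerivation_X, map_neg, map_add, map_smul, neg_add_cancel_right]

section Eval

variable {f : B →ₐ[k] R} {s : Fin 3 → R} (h : TransvectionRelations θ u w γ f s)

/-- The map `B[v₂][v₁] → R` that evaluates `v₁`, `v₂` at `s 0`, `s 1`. -/
def TransvectionRelations.eval : B[X][X] →ₐ[k] R :=
  eval₂AlgHom (eval₂AlgHom f (s 1) h.commute_one) (s 0) fun g => by
    induction g using Polynomial.induction_on' with
    | add g g' hg hg' => simpa only [map_add] using hg.add_left hg'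
    | monomial n b =>
      simpa using (h.commute_zero b).mul_left (h.commute_zero_one.symm.pow_left n)

@[simp] lemma TransvectionRelations.eval_C_C (b : B) : h.eval (C (C b)) = f b := by
  simp [eval]

@[simp] lemma TransvectionRelations.eval_C_X : h.eval (C X) = s 1 := by
  simp [eval]

@[simp] lemma TransvectionRelations.eval_X : h.eval X = s 0 := by
  simp [eval]

lemma TransvectionRelations.isOrePair_eval :
    IsOrePair (transvectionDerivation θ u w γ) h.eval (s 2) := by
  let S := oreSubalgebra (transvectionDerivation θ u w γ) h.eval (s 2)
  have hC_C (b : B) : C (C b) ∈ S := by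
    change s 2 * h.eval (C (C b)) = h.eval (C (C b)) * s 2 + h.eval _
    rw [transvectionDerivation_C_C, map_neg, map_add, map_mul, h.eval_X, h.eval_C_C, h.eval_C_C,
      h.eval_C_C, h.act_two, add_neg_cancel_right]
  have hC_X : C X ∈ S := by
    change s 2 * h.eval (C X) = h.eval (C X) * s 2 + h.eval _
    rw [transvectionDerivation_C_X, h.eval_C_X, h.commute_one_two.eq, map_zero, add_zero]
  have hX : X ∈ S := by
    change s 2 * h.eval X = h.eval X * s 2 + h.eval _
    rw [transvectionDerivation_X, map_neg, map_add, map_smul, h.eval_X, h.eval_C_X, h.eval_C_C,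
      h.comm_zero_two, add_neg_cancel_right]
  have hC : ∀ g : B[X], C g ∈ S :=
    mem_of_C_mem_of_X_mem (S := S.comap CAlgHom) hC_C hC_X
  exact mem_of_C_mem_of_X_mem hC hX

end Eval

section TotalDegree

variable (k B) in
/-- The filtration of `B[v₂][v₁][v₃]` by total degree. -/
def totalDegreeLE (d : ℕ) : Submodule k B[X][X][X] :=
  Submodule.span k {f | ∃ a b c r, a + b + c ≤ d ∧ f = monomial c (monomial a (monomial b r))}

lemma monomial_mem_totalDegreeLE {a b c d : ℕ} (h : a + b + c ≤ d) (r : B) :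
    monomial c (monomial a (monomial b r)) ∈ totalDegreeLE k B d :=
  Submodule.subset_span ⟨a, b, c, r, h, rfl⟩

lemma monotone_totalDegreeLE : Monotone (totalDegreeLE k B) := fun _ _ h =>
  Submodule.span_mono fun _ ⟨a, b, c, r, hd, hf⟩ => ⟨a, b, c, r, hd.trans h, hf⟩

lemma apply_mem_totalDegreeLE {M : Type*} [AddCommGroup M] [Module k M] {F : ℕ → Submodule k M}
    (hF : Monotone F) {T : B[X][X][X] →ₗ[k] M} {n : ℕ}
    (hT : ∀ a b c r, T (monomial c (monomial a (monomial b r))) ∈ F (a + b + c + n))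
    {d : ℕ} {f : B[X][X][X]} (hf : f ∈ totalDegreeLE k B d) :
    T f ∈ F (d + n) := by
  have h : totalDegreeLE k B d ≤ (F (d + n)).comap T :=
    Submodule.span_le.2 <| by
      rintro _ ⟨a, b, c, r, hd, rfl⟩
      exact hF (by lia) (hT a b c r)
  exact h hf

lemma C_C_C_mul_mem_totalDegreeLE (b : B) {d : ℕ} {f : B[X][X][X]}
    (hf : f ∈ totalDegreeLE k B d) : C (C (C b)) * f ∈ totalDegreeLE k B d := by
  refine apply_mem_totalDegreeLE (M := B[X][X][X]) (F := totalDegreeLE k B) (n := 0)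
    (T := LinearMap.mulLeft k (C (C (C b)))) monotone_totalDegreeLE (fun a b' c r => ?_) hf
  rw [LinearMap.mulLeft_apply, C_mul_monomial, C_mul_monomial, C_mul_monomial]
  exact monomial_mem_totalDegreeLE (by lia) _

lemma C_X_mul_mem_totalDegreeLE {d : ℕ} {f : B[X][X][X]} (hf : f ∈ totalDegreeLE k B d) :
    C X * f ∈ totalDegreeLE k B (d + 1) := by
  refine apply_mem_totalDegreeLE (M := B[X][X][X]) (F := totalDegreeLE k B)
    (T := LinearMap.mulLeft k (C (X : B[X][X]))) monotone_totalDegreeLE (fun a b c r => ?_) hf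
  rw [LinearMap.mulLeft_apply, C_mul_monomial, X_mul_monomial]
  exact monomial_mem_totalDegreeLE (by lia) _

lemma C_C_X_mul_mem_totalDegreeLE {d : ℕ} {f : B[X][X][X]} (hf : f ∈ totalDegreeLE k B d) :
    C (C X) * f ∈ totalDegreeLE k B (d + 1) := by
  refine apply_mem_totalDegreeLE (M := B[X][X][X]) (F := totalDegreeLE k B)
    (T := LinearMap.mulLeft k (C (C (X : B[X])))) monotone_totalDegreeLE (fun a b c r => ?_) hf
  rw [LinearMap.mulLeft_apply, C_mul_monomial, C_mul_monomial, X_mul_monomial]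
  exact monomial_mem_totalDegreeLE (by lia) _

lemma oreX_mem_totalDegreeLE {d : ℕ} {f : B[X][X][X]} (hf : f ∈ totalDegreeLE k B d) :
    oreX (transvectionDerivation θ u w γ) f ∈ totalDegreeLE k B (d + 1) := by
  refine apply_mem_totalDegreeLE monotone_totalDegreeLE (fun a b c r => ?_) hf
  rw [oreX_monomial, transvectionDerivation_monomial]
  simp only [map_add, map_neg, ← smul_monomial]
  refine add_mem (monomial_mem_totalDegreeLE (by lia) _) (neg_mem (add_mem (add_mem
    (monomial_mem_totalDegreeLE (by lia) _) (monomial_mem_totalDegreeLE (by lia) _)) ?_))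
  cases a with
  | zero => simp
  | succ a =>
    exact Submodule.smul_mem _ _ (add_mem
      (Submodule.smul_mem _ _ (monomial_mem_totalDegreeLE (by lia) _))
      (monomial_mem_totalDegreeLE (by lia) _))

end TotalDegree

section NormalForms

variable (k B) in
/-- The action of `B` on the normal forms `∑ r v₂ᵇ v₁ᵃ v₃ᶜ` in `B[v₂][v₁][v₃]`. -/
def groupAction : B →ₐ[k] Module.End k B[X][X][X] :=
  (coeffMul k B[X][X]).comp (CAlgHom.comp CAlgHom)

variable (θ u w γ) in
/-- The actions of `v₁`, `v₂` and `v₃` on the normal forms in `B[v₂][v₁][v₃]`. -/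
def vectorAction : Fin 3 → Module.End k B[X][X][X] :=
  ![coeffMul k B[X][X] X, coeffMul k B[X][X] (C X), oreX (transvectionDerivation θ u w γ)]

lemma transvectionRelations_groupAction_vectorAction :
    TransvectionRelations θ u w γ (groupAction k B) (vectorAction θ u w γ) :=
  (isOrePair_coeffMul_oreX _).transvectionRelations

lemma groupAction_mem_totalDegreeLE (b : B) {d : ℕ} {f : B[X][X][X]}
    (hf : f ∈ totalDegreeLE k B d) : groupAction k B b f ∈ totalDegreeLE k B d :=
  C_C_C_mul_mem_totalDegreeLE b hf

lemma vectorAction_mem_totalDegreeLE (i : Fin 3) {d : ℕ} {f : B[X][X][X]}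
    (hf : f ∈ totalDegreeLE k B d) :
    vectorAction θ u w γ i f ∈ totalDegreeLE k B (d + 1) := by
  fin_cases i
  · exact C_X_mul_mem_totalDegreeLE hf
  · exact C_C_X_mul_mem_totalDegreeLE hf
  · exact oreX_mem_totalDegreeLE hf

variable {f : B →ₐ[k] R} {s : Fin 3 → R} (h : TransvectionRelations θ u w γ f s)

/-- The map `∑ r v₂ᵇ v₁ᵃ v₃ᶜ ↦ ∑ f(r) (s 1)ᵇ (s 0)ᵃ (s 2)ᶜ`. -/
def TransvectionRelations.ofNormalForm : B[X][X][X] →ₗ[k] R :=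
  normalOrder h.eval (s 2)

lemma TransvectionRelations.ofNormalForm_monomial (a b c : ℕ) (r : B) :
    h.ofNormalForm (monomial c (monomial a (monomial b r))) =
      f r * s 1 ^ b * s 0 ^ a * s 2 ^ c := by
  simp [ofNormalForm, eval]

lemma TransvectionRelations.ofNormalForm_one : h.ofNormalForm 1 = 1 :=
  normalOrder_one _ _

lemma TransvectionRelations.ofNormalForm_groupAction (b : B) (m : B[X][X][X]) :
    h.ofNormalForm (groupAction k B b m) = f b * h.ofNormalForm m :=
  (normalOrder_C_mul _ _ _ _).trans (congrArg (· * _) (h.eval_C_C b))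

lemma TransvectionRelations.ofNormalForm_vectorAction (i : Fin 3) (m : B[X][X][X]) :
    h.ofNormalForm (vectorAction θ u w γ i m) = s i * h.ofNormalForm m := by
  fin_cases i
  · exact (normalOrder_C_mul _ _ _ _).trans (congrArg (· * _) h.eval_X)
  · exact (normalOrder_C_mul _ _ _ _).trans (congrArg (· * _) h.eval_C_X)
  · exact h.isOrePair_eval.normalOrder_oreX m

lemma TransvectionRelations.map_ofNormalForm_apply_one {π : R →ₐ[k] Module.End k B[X][X][X]}
    (hf : ∀ b, π (f b) = groupAction k B b) (hs : ∀ i, π (s i) = vectorAction θ u w γ i)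
    (m : B[X][X][X]) : π (h.ofNormalForm m) 1 = m := by
  have eval_eq : π.comp h.eval = coeffMul k B[X][X] := by
    refine algHom_ext' (algHom_ext' (AlgHom.ext fun b => ?_) ?_) ?_
    · exact (congrArg π (h.eval_C_C b)).trans (hf b)
    · exact (congrArg π h.eval_C_X).trans (hs 1)
    · exact (congrArg π h.eval_X).trans (hs 0)
  rw [ofNormalForm, map_normalOrder, eval_eq, hs]
  exact normalOrder_coeffMul_oreX_apply_one _ m

end NormalForms

end TransvectionRelations

section Example

variable {k : Type} [Field k] {p : ℕ} [Fact p.Prime]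

lemma κC7_apply (v w : Fin 3 → k) :
    κC7 k p v w = (v 0 * w 2 - v 2 * w 0) • MonoidAlgebra.single (gg p) 1 := by
  simp [κC7, B3det]

lemma κL7_apply (v w : Fin 3 → k) :
    κL7 k p v w = (v 0 * w 2 - v 2 * w 0) • (Pi.single 1 1 ⊗ₜ[k] 1) := by
  simp [κL7, B3det]

section Commutator

variable {R : Type*} [Ring R] [Algebra k R]

lemma comm_relation_rhs_eq (β γ : k) (f : MonoidAlgebra k (Multiplicative (ZMod p)) →ₐ[k] R)
    (φ : (Fin 3 → k) →ₗ[k] R) (v w : Fin 3 → k) :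
    φ w * φ v + LinearMap.mul' k R (TensorProduct.map φ f.toLinearMap ((γ • κL7 k p) v w)) +
        f ((β • κC7 k p) v w) =
      φ w * φ v + (v 0 * w 2 - v 2 * w 0) •
        (γ • φ (Pi.single 1 1) + f (β • .single (gg p) 1)) := by
  simp only [LinearMap.smul_apply, κC7_apply, κL7_apply, map_smul, TensorProduct.map_tmul,
    LinearMap.mul'_apply, AlgHom.toLinearMap_apply, map_one, mul_one]
  module

end Commutator

variable [CharP k p]

lemma ρ3_apply (x : Multiplicative (ZMod p)) (v : Fin 3 → k) :
    ρ3 k p x v = v + (cf k p x * v 2) • Pi.single 0 1 := by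
  simp [ρ3, E3, ← Pi.single_smul]

lemma lam7_apply (x : Multiplicative (ZMod p)) (v : Fin 3 → k) :
    lam7 k p x v = (v 2 * cf k p x) • MonoidAlgebra.single (x * (gg p)⁻¹) 1 := by
  simp [lam7]

variable (k p) in
/-- The additive character `gⁱ ↦ i` of `G`, well defined because `k` has characteristic `p`. -/
def cfHom : Additive (Multiplicative (ZMod p)) →+ k :=
  AddMonoidHom.mk' (fun x => cf k p x.toMul) fun x y => cf_mul k p x.toMul y.toMul

lemma characterDerivation_cfHom_single (x : Multiplicative (ZMod p)) :
    characterDerivation (cfHom k p) (.single x 1) = cf k p x • .single x 1 :=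
  characterDerivation_single _ x 1

section Relations

variable {R : Type*} [Ring R] [Algebra k R] {α β γ : k}
  {f : MonoidAlgebra k (Multiplicative (ZMod p)) →ₐ[k] R} {φ : (Fin 3 → k) →ₗ[k] R}

variable (α f φ) in
lemma act_relation_rhs_eq (x : Multiplicative (ZMod p)) (v : Fin 3 → k) :
    φ (ρ3 k p x v) * f (.single x 1) + f ((α • lam7 k p) x v) =
      φ v * f (.single x 1) + (cf k p x * v 2) •
        (φ (Pi.single 0 1) * f (.single x 1) + α • f (.single (x * (gg p)⁻¹) 1)) := by
  simp only [Pi.smul_apply, LinearMap.smul_apply, ρ3_apply, lam7_apply, map_add, map_smul,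
    add_mul, smul_mul_assoc]
  module

lemma act_relation_correction_eq (x : Multiplicative (ZMod p)) (s : R) :
    cf k p x • (s * f (.single x 1) + α • f (.single (x * (gg p)⁻¹) 1)) =
      s * f (characterDerivation (cfHom k p) (.single x 1)) +
        f (α • .single (gg p)⁻¹ 1 * characterDerivation (cfHom k p) (.single x 1)) := by
  simp only [characterDerivation_cfHom_single, mul_smul_comm, smul_mul_assoc, map_smul,
    MonoidAlgebra.single_mul_single, mul_one, mul_comm (gg p)⁻¹]
  module

lemma IsHPPair.transvectionRelations
    (h : IsHPPair (ρ3 k p) (α • lam7 k p) (β • κC7 k p) (γ • κL7 k p) f φ) :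
    TransvectionRelations (characterDerivation (cfHom k p)) (α • .single (gg p)⁻¹ 1)
      (β • .single (gg p) 1) γ f (fun i => φ (Pi.single i 1)) := by
  let θ := (characterDerivation (cfHom k p)).toLinearMap
  let u : MonoidAlgebra k (Multiplicative (ZMod p)) := α • .single (gg p)⁻¹ 1
  have act (x) (v) := (h.act x v).trans (act_relation_rhs_eq α f φ x v)
  have comm (v w) := (h.comm v w).trans (comm_relation_rhs_eq β γ f φ v w)
  have ext_single {S T : MonoidAlgebra k (Multiplicative (ZMod p)) →ₗ[k] R}
      (hST : ∀ x, S (.single x 1) = T (.single x 1)) (b) : S b = T b :=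
    LinearMap.congr_fun (MonoidAlgebra.lhom_ext' fun x => LinearMap.ext_ring (hST x)) b
  have commute_of_single {s : R} (hs : ∀ x, f (.single x 1) * s = s * f (.single x 1)) (b) :
      Commute (f b) s :=
    ext_single (S := .mulRight k s ∘ₗ f.toLinearMap) (T := .mulLeft k s ∘ₗ f.toLinearMap) hs b
  refine ⟨commute_of_single fun x => ?_, commute_of_single fun x => ?_,
    ext_single (S := .mulRight k _ ∘ₗ f.toLinearMap) (T := .mulLeft k _ ∘ₗ f.toLinearMap +
      (.mulLeft k _ ∘ₗ f.toLinearMap ∘ₗ θ + f.toLinearMap ∘ₗ .mulLeft k u ∘ₗ θ)) fun x => ?_,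
    ?_, ?_, ?_⟩
  · simpa using act x (Pi.single 0 1)
  · simpa using act x (Pi.single 1 1)
  · have act_two := act x (Pi.single 2 1)
    rw [Pi.single_eq_same, mul_one, act_relation_correction_eq] at act_two
    exact act_two
  · simpa [commute_iff_eq] using comm (Pi.single 0 1) (Pi.single 1 1)
  · simpa [commute_iff_eq] using comm (Pi.single 1 1) (Pi.single 2 1)
  · simpa using comm (Pi.single 0 1) (Pi.single 2 1)

lemma TransvectionRelations.isHPPair
    (h : TransvectionRelations (characterDerivation (cfHom k p)) (α • .single (gg p)⁻¹ 1)
      (β • .single (gg p) 1) γ f (fun i => φ (Pi.single i 1))) :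
    IsHPPair (ρ3 k p) (α • lam7 k p) (β • κC7 k p) (γ • κL7 k p) f φ := by
  have expand (v : Fin 3 → k) : φ v =
      v 0 • φ (Pi.single 0 1) + v 1 • φ (Pi.single 1 1) + v 2 • φ (Pi.single 2 1) := by
    rw [map_eq_sum_smul_map_single, Fin.sum_univ_three]
  refine ⟨fun x v => .trans ?_ (act_relation_rhs_eq α f φ x v).symm,
    fun v w => .trans ?_ (comm_relation_rhs_eq β γ f φ v w).symm⟩
  · rw [mul_comm (cf k p x), mul_smul, act_relation_correction_eq]
    simp only [expand v, mul_add, add_mul, mul_smul_comm, smul_mul_assoc, MonoidAlgebra.of_apply,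
      (h.commute_zero _).eq, (h.commute_one _).eq, h.act_two]
    module
  · simp only [expand v, expand w, mul_add, add_mul, mul_smul_comm, smul_mul_assoc,
      h.commute_zero_one.eq, h.commute_one_two.eq, h.comm_zero_two]
    module

end Relations

variable (α β γ : k)

variable (k p) in
/-- The algebra `H_{λ,κ}` of the example with `λ`, `κ^C` and `κ^L` scaled by `α`, `β` and `γ`. -/
abbrev TransvectionHP : Type :=
  HP k (Multiplicative (ZMod p)) (Fin 3 → k) (ρ3 k p) (α • lam7 k p) (β • κC7 k p) (γ • κL7 k p)

variable (k p) in
/-- The space of normal forms `∑ r v₂ᵇ v₁ᵃ v₃ᶜ` with `r` in `kG`: the variables are `v₂`, `v₁`, `v₃`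
from the inside out. -/
abbrev NormalForm : Type := (MonoidAlgebra k (Multiplicative (ZMod p)))[X][X][X]

lemma isHPPair_groupAction_vectorAction :
    IsHPPair (ρ3 k p) (α • lam7 k p) (β • κC7 k p) (γ • κL7 k p)
      (groupAction k (MonoidAlgebra k (Multiplicative (ZMod p))))
      (Fintype.linearCombination k (vectorAction (characterDerivation (cfHom k p))
        (α • .single (gg p)⁻¹ 1) (β • .single (gg p) 1) γ)) := by
  refine TransvectionRelations.isHPPair ?_
  simpa only [Fintype.linearCombination_apply_single, one_smul] using
    transvectionRelations_groupAction_vectorAction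

variable (p) in
/-- The action of `H_{λ,κ}` on normal forms, which is left multiplication once `H_{λ,κ}` is
identified with the space of normal forms. -/
def normalFormAction : TransvectionHP k p α β γ →ₐ[k] Module.End k (NormalForm k p) :=
  (isHPPair_groupAction_vectorAction α β γ).lift

lemma normalFormAction_groupHP (x : MonoidAlgebra k (Multiplicative (ZMod p))) :
    normalFormAction p α β γ (groupHP _ _ _ _ x) = groupAction k _ x :=
  IsHPPair.lift_groupHP _ x

lemma normalFormAction_vectorHP (v : Fin 3 → k) :
    normalFormAction p α β γ (vectorHP _ _ _ _ v) =
      ∑ i, v i • vectorAction (characterDerivation (cfHom k p)) (α • .single (gg p)⁻¹ 1)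
        (β • .single (gg p) 1) γ i :=
  IsHPPair.lift_vectorHP _ v

variable (p) in
lemma transvectionRelations_groupHP_vectorHP :
    TransvectionRelations (characterDerivation (cfHom k p)) (α • .single (gg p)⁻¹ 1)
      (β • .single (gg p) 1) γ
      (groupHP (ρ3 k p) (α • lam7 k p) (β • κC7 k p) (γ • κL7 k p))
      (fun i => vectorHP _ _ _ _ (Pi.single i 1)) :=
  (isHPPair_groupHP_vectorHP _ _ _ _).transvectionRelations

lemma ofNormalForm_normalFormAction (h : TransvectionHP k p α β γ) (m : NormalForm k p) :
    (transvectionRelations_groupHP_vectorHP p α β γ).ofNormalForm (normalFormAction p α β γ h m) =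
      h * (transvectionRelations_groupHP_vectorHP p α β γ).ofNormalForm m := by
  induction h using HP_induction generalizing m with
  | groupHP x =>
    rw [normalFormAction_groupHP]
    exact TransvectionRelations.ofNormalForm_groupAction _ x m
  | vectorHP v =>
    rw [normalFormAction_vectorHP, map_eq_sum_smul_map_single (vectorHP _ _ _ _) v,
      Finset.sum_mul, LinearMap.sum_apply, map_sum]
    refine Finset.sum_congr rfl fun i _ => ?_
    rw [LinearMap.smul_apply, map_smul, smul_mul_assoc]
    exact congrArg (v i • ·) (TransvectionRelations.ofNormalForm_vectorAction _ i m)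
  | add s t hs ht => rw [map_add, LinearMap.add_apply, map_add, hs, ht, add_mul]
  | mul s t hs ht => rw [map_mul, Module.End.mul_apply, hs, ht, mul_assoc]

lemma normalFormAction_ofNormalForm_apply_one (m : NormalForm k p) :
    normalFormAction p α β γ
      ((transvectionRelations_groupHP_vectorHP p α β γ).ofNormalForm m) 1 = m := by
  refine TransvectionRelations.map_ofNormalForm_apply_one _ (normalFormAction_groupHP α β γ)
    (fun i => ?_) m
  rw [normalFormAction_vectorHP]
  simp [Pi.single_apply]

variable (p) in
/-- The isomorphism `h ↦ h · 1` from `H_{λ,κ}` to the space of normal forms. -/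
def normalFormEquiv : TransvectionHP k p α β γ ≃ₗ[k] NormalForm k p :=
  .ofLinearMap (LinearMap.applyₗ 1 ∘ₗ (normalFormAction p α β γ).toLinearMap)
    (transvectionRelations_groupHP_vectorHP p α β γ).ofNormalForm
    (LinearMap.ext fun m => normalFormAction_ofNormalForm_apply_one α β γ m)
    (LinearMap.ext fun h => (ofNormalForm_normalFormAction α β γ h 1).trans <| by
      rw [TransvectionRelations.ofNormalForm_one, mul_one]
      rfl)

lemma normalFormEquiv_mem_totalDegreeLE {d : ℕ} {h : TransvectionHP k p α β γ}
    (hh : h ∈ filtP _ _ _ _ _ _ _ d) :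
    normalFormEquiv p α β γ h ∈ totalDegreeLE k (MonoidAlgebra k (Multiplicative (ZMod p))) d := by
  obtain ⟨t, ht, rfl⟩ := hh
  have one_mem : (1 : NormalForm k p) ∈ totalDegreeLE k _ 0 :=
    monomial_mem_totalDegreeLE (a := 0) (b := 0) (c := 0) le_rfl 1
  rw [← zero_add d]
  refine apply_mem_of_mem_filtT (π := (normalFormAction p α β γ).comp (toHP _ _ _ _ _ _ _))
    monotone_totalDegreeLE (fun x e m hm => ?_) (fun v e m hm => ?_) ht one_mem
  · rw [AlgHom.comp_apply, toHP_gIn, normalFormAction_groupHP]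
    exact groupAction_mem_totalDegreeLE x hm
  · rw [AlgHom.comp_apply, toHP_vIn, normalFormAction_vectorHP, LinearMap.sum_apply]
    exact sum_mem fun i _ => Submodule.smul_mem _ _ (vectorAction_mem_totalDegreeLE i hm)

lemma ofNormalForm_mem_filtP {d : ℕ} {m : NormalForm k p} (hm : m ∈ totalDegreeLE k _ d) :
    (transvectionRelations_groupHP_vectorHP p α β γ).ofNormalForm m ∈ filtP _ _ _ _ _ _ _ d := by
  refine apply_mem_totalDegreeLE (n := 0) (monotone_filtP _ _ _ _) (fun a b c r => ?_) hm
  rw [(transvectionRelations_groupHP_vectorHP p α β γ).ofNormalForm_monomial]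
  exact groupHP_mul_mem_filtP (ρ3 k p) (α • lam7 k p) (β • κC7 k p) (γ • κL7 k p) r _ _ _ a b c

lemma finrank_filtP (d : ℕ) :
    Module.finrank k (filtP k (Multiplicative (ZMod p)) (Fin 3 → k) (ρ3 k p) (α • lam7 k p)
      (β • κC7 k p) (γ • κL7 k p) d) =
    Module.finrank k (totalDegreeLE k (MonoidAlgebra k (Multiplicative (ZMod p))) d) := by
  have map_filtP : (filtP k _ _ _ _ _ _ d).map (normalFormEquiv p α β γ).toLinearMap =
      totalDegreeLE k (MonoidAlgebra k (Multiplicative (ZMod p))) d := by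
    apply le_antisymm
    · rintro _ ⟨h, hh, rfl⟩
      exact normalFormEquiv_mem_totalDegreeLE α β γ hh
    · exact fun m hm => ⟨_, ofNormalForm_mem_filtP α β γ hm, (normalFormEquiv p α β γ).right_inv m⟩
  rw [← map_filtP]
  exact (LinearEquiv.finrank_map_eq (normalFormEquiv p α β γ) _).symm

variable (k p) in
theorem example_transvection_is_PBW_deformation_general :
    IsPBWP k (Multiplicative (ZMod p)) (Fin 3 → k) (ρ3 k p) (α • lam7 k p) (β • κC7 k p)
      (γ • κL7 k p) := by
  intro d
  have h := finrank_filtP (p := p) (0 : k) 0 0 d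
  rw [zero_smul, zero_smul, zero_smul] at h
  rw [finrank_filtP, h]

end Example

end DeformKoszul

/-- **Example (Section 5)** of Shepler–Witherspoon, "Deforming group actions on Koszul
algebras": in characteristic `p > 2`, for the cyclic group `G = ⟨g⟩` of order `p`
acting on `V = k v₁ ⊕ k v₂ ⊕ k v₃` by the transvection fixing `v₁, v₂` and sending
`v₃ ↦ v₁ + v₃`, the parameters `λ(gⁱ,v₃) = i g^{i−1}`, `κ^C(v₁,v₃) = g = −κ^C(v₃,v₁)`,
`κ^L(v₁,v₃) = v₂ ⊗ 1 = −κ^L(v₃,v₁)` (zero on all other pairs of basis vectors) define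
a PBW deformation `H_{λ,κ}` of `S(V) ⋊ G`. -/
theorem example_transvection_is_PBW_deformation
    (k : Type) [Field k] (p : ℕ) [Fact p.Prime] (hp : 2 < p) [CharP k p] :
    IsPBWP k (Multiplicative (ZMod p)) (Fin 3 → k) (ρ3 k p) (lam7 k p) (κC7 k p) (κL7 k p) := by
  simpa only [one_smul] using example_transvection_is_PBW_deformation_general k p 1 1 1
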